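/- Let X = {a, b, c} be a three-letter alphabet and V₃ ⊆ {a,b}* be the least language satisfying V₃ = {a} ∪ {b}·V₃·V₃·V₃. Then the open ω-language F₁ := V₃·c·X^ω ⊆ X^ω does not have the Automatic Baire property. -/

import Mathlib

open Set MeasureTheory Computability

namespace AutoBaire

/-- The Cantor topology on the space of ω-words over `X`:
the product of the discrete topology on `X`. -/
def cantorTop (X : Type) : TopologicalSpace (ℕ → X) :=
  @Pi.topologicalSpace ℕ (fun _ => X) (fun _ => ⊥)

/-- The Borel σ-algebra of the Cantor space. -/
def cantorBorel (X : Type) : MeasurableSpace (ℕ → X) :=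
  @borel (ℕ → X) (cantorTop X)

variable {X : Type}

/-- Concatenation `w·ξ` of a finite word with an ω-word. -/
def wcat (w : List X) (ξ : ℕ → X) : ℕ → X :=
  Stream'.appendStream' w ξ

/-- The ball (cylinder) `w·X^ω`. -/
def cyl (w : List X) : Set (ℕ → X) := {ξ | ∃ η : ℕ → X, ξ = wcat w η}

/-- The ω-language `W·A` for a language `W` and an ω-language `A`. -/
def catOmega (W : Language X) (A : Set (ℕ → X)) : Set (ℕ → X) :=
  {ξ | ∃ w ∈ W, ∃ η ∈ A, ξ = wcat w η}

/-- `V^ω`: the set of ω-words that are infinite concatenations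
`v₁·v₂·⋯` of non-empty words `vᵢ ∈ V`. -/
def omegaPow (V : Language X) : Set (ℕ → X) :=
  {ξ | ∃ f : ℕ → List X, (∀ i, f i ∈ V ∧ f i ≠ []) ∧
    ∀ k, ξ ∈ cyl (((List.range k).map f).flatten)}

/-- Regular languages: those obtained from finite languages via the operations
union, concatenation and star. -/
inductive IsRegLang : Language X → Prop
  | finite (W : Language X) : (W : Set (List X)).Finite → IsRegLang W
  | union (W V : Language X) : IsRegLang W → IsRegLang V → IsRegLang (W + V)
  | concat (W V : Language X) : IsRegLang W → IsRegLang V → IsRegLang (W * V)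
  | star (W : Language X) : IsRegLang W → IsRegLang (W∗)

/-- Regular ω-languages: finite unions `⋃ᵢ Wᵢ·Vᵢ^ω` with `Wᵢ, Vᵢ` regular. -/
def IsRegOmega (F : Set (ℕ → X)) : Prop :=
  ∃ (n : ℕ) (W V : Fin n → Language X),
    (∀ i, IsRegLang (W i) ∧ IsRegLang (V i)) ∧
    F = ⋃ i, catOmega (W i) (omegaPow (V i))

/-- `X*·w·X^ω`: the set of ω-words containing `w` as an infix. -/
def infixOcc (w : List X) : Set (ℕ → X) :=
  {ξ | ∃ u : List X, ξ ∈ cyl (u ++ w)}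

/-- An ω-word is disjunctive if every finite word occurs in it as an infix. -/
def Disjunctive (ξ : ℕ → X) : Prop := ∀ w : List X, ξ ∈ infixOcc w

/-- Ultimately periodic ω-words: `ξ = w·v·v·v·⋯` with `v ≠ e`. -/
def UltPeriodic (ξ : ℕ → X) : Prop :=
  ∃ (w v : List X) (h : v ≠ []), ξ = wcat w (Stream'.cycle v h)

/-- The Automatic Baire property: `F Δ E ⊆ F'` for some regular open
ω-language `E` and some regular ω-language `F'` of first Baire category. -/
def HasABP (F : Set (ℕ → X)) : Prop :=
  ∃ E F' : Set (ℕ → X),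
    IsRegOmega E ∧ @IsOpen _ (cantorTop X) E ∧
    IsRegOmega F' ∧ @IsMeagre _ (cantorTop X) F' ∧
    symmDiff F E ⊆ F'

/-- The measure is finite and non-null: `0 < μ(X^ω) < ∞`. -/
def FiniteNonNull (μ : @MeasureTheory.Measure (ℕ → X) (cantorBorel X)) : Prop :=
  0 < μ Set.univ ∧ μ Set.univ < ⊤

/-- `supp(μ) = X^ω`: every non-empty open set has positive measure. -/
def FullSupport (μ : @MeasureTheory.Measure (ℕ → X) (cantorBorel X)) : Prop :=
  ∀ U : Set (ℕ → X), @IsOpen _ (cantorTop X) U → U.Nonempty → 0 < μ U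

/-- The balance condition: there is `c > 0` such that for all `w ∈ X*`, `x ∈ X`
either `μ(wx·X^ω) = 0` or `c·μ(w·X^ω) ≤ μ(wx·X^ω)`. -/
def Balanced (μ : @MeasureTheory.Measure (ℕ → X) (cantorBorel X)) : Prop :=
  ∃ c : ENNReal, 0 < c ∧ ∀ (w : List X) (x : X),
    μ (cyl (w ++ [x])) = 0 ∨ c * μ (cyl w) ≤ μ (cyl (w ++ [x]))


/-- The fixed-point equation `V = {a} ∪ {b}·V·V·V`. -/
def V3Eq (a b : X) (V : Language X) : Prop :=
  ∀ u : List X, u ∈ V ↔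
    (u = [a] ∨ ∃ v₁ ∈ V, ∃ v₂ ∈ V, ∃ v₃ ∈ V, u = [b] ++ v₁ ++ v₂ ++ v₃)

def FQ (L : Language X) : Prop := (Set.range L.leftQuotient).Finite

lemma FQ_of {L : Language X} (S : Set (Language X)) (hS : S.Finite)
    (h : ∀ u y, u ++ y ∈ L → ∃ M ∈ S, y ∈ M ∧ ∀ z ∈ M, u ++ z ∈ L) : FQ L := by
  refine (hS.finite_subsets.image
    (fun T : Set (Language X) => ({y | ∃ M ∈ T, y ∈ M} : Language X))).subset ?_
  rintro _ ⟨u, rfl⟩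
  refine ⟨{M ∈ S | ∀ z ∈ M, u ++ z ∈ L}, fun M hM => hM.1, ?_⟩
  ext y
  constructor
  · rintro ⟨M, ⟨_, h2⟩, h3⟩
    exact h2 y h3
  · intro hy
    obtain ⟨M, h1, h2, h3⟩ := h u y hy
    exact ⟨M, ⟨h1, h3⟩, h2⟩

lemma FQ_reg {L : Language X} (h : IsRegLang L) : FQ L := by
  induction h with
  | finite W hW =>
    refine FQ_of (⋃ w ∈ (W : Set (List X)), (fun y => ({y} : Set (List X))) '' {y | y ∈ w.tails}) ?_ ?_
    · exact hW.biUnion (fun w _ => (List.finite_toSet w.tails).image _)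
    · intro u y hy
      refine ⟨({y} : Set (List X)), ?_, rfl, ?_⟩
      · refine Set.mem_biUnion hy ⟨y, ?_, rfl⟩
        simp
      · rintro z hz
        have : z = y := hz
        rw [this]; exact hy
  | union W V _ _ h1 h2 =>
    exact Language.IsRegular.finite_range_leftQuotient
      (Language.IsRegular.add (.of_finite_range_leftQuotient h1) (.of_finite_range_leftQuotient h2))
  | concat W V _ _ h1 h2 =>
    refine FQ_of ((fun M => M * V) '' Set.range W.leftQuotient ∪ Set.range V.leftQuotient)
      ((h1.image _).union h2) ?_
    intro u y hy
    obtain ⟨w, hw, v, hv, e⟩ := Language.mem_mul.1 hy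
    rcases List.append_eq_append_iff.1 e with ⟨t, rfl, rfl⟩ | ⟨t, rfl, rfl⟩
    · refine ⟨V.leftQuotient t, Or.inr ⟨t, rfl⟩, hv, ?_⟩
      intro z hz
      exact Language.mem_mul.2 ⟨w, hw, t ++ z, hz, by simp⟩
    · refine ⟨W.leftQuotient u * V, Or.inl ⟨_, ⟨u, rfl⟩, rfl⟩, Language.mem_mul.2 ⟨t, hw, v, hv, rfl⟩, ?_⟩
      intro z hz
      obtain ⟨p, hp, q, hq, rfl⟩ := Language.mem_mul.1 hz
      exact Language.mem_mul.2 ⟨u ++ p, hp, q, hq, by simp⟩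
  | star W _ h1 =>
    refine FQ_of ((fun M => M * W∗) '' Set.range W.leftQuotient ∪ {W∗})
      ((h1.image _).union (Set.finite_singleton _)) ?_
    intro u y hy
    obtain ⟨l, e, hl⟩ := Language.mem_kstar.1 hy
    have cons_mem : ∀ w ∈ W, ∀ x ∈ W∗, w ++ x ∈ W∗ := by
      intro w hw x hx
      obtain ⟨l, rfl, hl⟩ := Language.mem_kstar.1 hx
      refine Language.mem_kstar.2 ⟨w :: l, by simp, ?_⟩
      simpa using ⟨hw, hl⟩
    clear hy
    induction l generalizing u with
    | nil =>
      obtain ⟨rfl, rfl⟩ : u = [] ∧ y = [] := by simpa using e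
      exact ⟨W∗, Or.inr rfl, Language.nil_mem_kstar _, fun z hz => hz⟩
    | cons w l ih =>
      have hw : w ∈ W := hl w (by simp)
      have hl' : ∀ y ∈ l, y ∈ W := fun y hy => hl y (by simp [hy])
      rw [List.flatten_cons] at e
      rcases List.append_eq_append_iff.1 e with ⟨t, rfl, rfl⟩ | ⟨t, rfl, e2⟩
      · refine ⟨W.leftQuotient u * W∗, Or.inl ⟨_, ⟨u, rfl⟩, rfl⟩,
          Language.mem_mul.2 ⟨t, hw, _, Language.join_mem_kstar hl', rfl⟩, ?_⟩
        intro z hz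
        obtain ⟨p, hp, q, hq, rfl⟩ := Language.mem_mul.1 hz
        rw [← List.append_assoc]
        exact cons_mem _ hp _ hq
      · obtain ⟨M, h1, h2, h3⟩ := ih t e2.symm hl'
        refine ⟨M, h1, h2, fun z hz => ?_⟩
        rw [List.append_assoc]
        exact cons_mem _ hw _ (h3 z hz)

def prefLang (L : Language X) : Language X := {u | ∃ t, u ++ t ∈ L}

lemma FQ_pref {L : Language X} (h : FQ L) : FQ (prefLang L) := by
  refine (h.image prefLang).subset ?_
  rintro _ ⟨u, rfl⟩
  refine ⟨_, ⟨u, rfl⟩, ?_⟩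
  ext y
  constructor
  · rintro ⟨t, ht⟩
    exact ⟨t, by rw [List.append_assoc]; exact ht⟩
  · rintro ⟨t, ht⟩
    exact ⟨t, by rw [List.append_assoc] at ht; exact ht⟩

lemma wcat_append (u v : List X) (η : ℕ → X) : wcat (u ++ v) η = wcat u (wcat v η) := by
  induction u with
  | nil => rfl
  | cons a u ih =>
    funext n
    cases n with
    | zero => rfl
    | succ n => exact congrFun ih n

lemma mem_cyl {w : List X} {ξ : ℕ → X} :
    ξ ∈ cyl w ↔ ∀ i (h : i < w.length), ξ i = w[i] := by
  induction w generalizing ξ with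
  | nil => simp only [List.length_nil, Nat.not_lt_zero, false_imp_iff, forall_const, forall_false, iff_true]; exact ⟨ξ, rfl⟩
  | cons a w ih =>
    constructor
    · rintro ⟨η, rfl⟩ i h
      cases i with
      | zero => rfl
      | succ n => exact ih.1 ⟨η, rfl⟩ n (by simpa using h)
    · intro h
      obtain ⟨η, hη⟩ := (ih (ξ := fun n => ξ (n+1))).2 (fun i hi => h (i+1) (by simpa using hi))
      refine ⟨η, ?_⟩
      funext n
      cases n with
      | zero => exact h 0 (by simp)
      | succ n => exact congrFun hη n

lemma prefix_of_cyl {u v : List X} {ξ : ℕ → X} (hu : ξ ∈ cyl u) (hv : ξ ∈ cyl v)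
    (h : u.length ≤ v.length) : u <+: v := by
  rw [mem_cyl] at hu hv
  rw [List.prefix_iff_eq_take]
  apply List.ext_getElem
  · simp [h]
  · intro i h1 h2
    rw [← hu i h1, List.getElem_take, hv]

lemma omegaPow_cons {V : Language X} {v : List X} (hv : v ∈ V) {η : ℕ → X}
    (hη : η ∈ omegaPow V) : wcat v η ∈ omegaPow V := by
  by_cases hne : v = []
  · subst hne; exact hη
  obtain ⟨f, hf, hk⟩ := hη
  refine ⟨fun n => Nat.casesOn n v f, ?_, ?_⟩
  · intro i
    cases i with
    | zero => exact ⟨hv, hne⟩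
    | succ n => exact hf n
  · intro k
    cases k with
    | zero => exact ⟨_, rfl⟩
    | succ k =>
      obtain ⟨ζ, hζ⟩ := hk k
      refine ⟨ζ, ?_⟩
      rw [List.range_succ_eq_map, List.map_cons, List.flatten_cons, List.map_map, wcat_append]
      exact congrArg _ hζ

lemma omegaPow_star {V : Language X} {v : List X} (hv : v ∈ V∗) {η : ℕ → X}
    (hη : η ∈ omegaPow V) : wcat v η ∈ omegaPow V := by
  obtain ⟨l, rfl, hl⟩ := Language.mem_kstar.1 hv
  clear hv
  induction l with
  | nil => exact hη
  | cons w l ih =>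
    rw [List.flatten_cons, wcat_append]
    exact omegaPow_cons (hl w (by simp)) (ih (fun y hy => hl y (by simp [hy])))

def hit (E : Set (ℕ → X)) : Language X := {u | ∃ ξ ∈ E, ξ ∈ cyl u}

lemma len_flat (f : ℕ → List X) (hf : ∀ i, f i ≠ []) (k : ℕ) :
    k ≤ (((List.range k).map f).flatten).length := by
  induction k with
  | zero => simp
  | succ k ih =>
    rw [List.range_succ, List.map_append, List.flatten_append, List.length_append]
    have := List.length_pos_iff.2 (hf k)
    simp only [List.map_cons, List.map_nil, List.flatten_cons, List.flatten_nil, List.append_nil]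
    omega

lemma hit_cat (W V : Language X) (hne : (omegaPow V).Nonempty) :
    hit (catOmega W (omegaPow V)) = prefLang (W * V∗) := by
  ext u
  constructor
  · rintro ⟨ξ, ⟨w, hw, η, ⟨f, hf, hk⟩, rfl⟩, hu⟩
    obtain ⟨ζ, hζ⟩ := hk u.length
    have h1 : wcat w η ∈ cyl (w ++ ((List.range u.length).map f).flatten) :=
      ⟨ζ, by rw [wcat_append, ← hζ]⟩
    have h2 := len_flat f (fun i => (hf i).2) u.length
    obtain ⟨t, ht⟩ := prefix_of_cyl hu h1 (by rw [List.length_append]; omega)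
    refine ⟨t, ?_⟩
    rw [ht]
    refine Language.mem_mul.2 ⟨w, hw, _, Language.join_mem_kstar ?_, rfl⟩
    intro y hy
    obtain ⟨i, _, rfl⟩ := List.mem_map.1 hy
    exact (hf i).1
  · rintro ⟨t, ht⟩
    obtain ⟨w, hw, x, hx, e⟩ := Language.mem_mul.1 ht
    obtain ⟨η, hη⟩ := hne
    refine ⟨wcat w (wcat x η), ⟨w, hw, _, omegaPow_star hx hη, rfl⟩, wcat t η, ?_⟩
    rw [← wcat_append, ← wcat_append, e]

lemma FQ_hit {E : Set (ℕ → X)} (hE : IsRegOmega E) : FQ (hit E) := by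
  obtain ⟨n, W, V, h, rfl⟩ := hE
  have key : ∀ i, FQ (hit (catOmega (W i) (omegaPow (V i)))) := by
    intro i
    by_cases hne : (omegaPow (V i)).Nonempty
    · rw [hit_cat _ _ hne]
      exact FQ_pref (FQ_reg (.concat _ _ (h i).1 (.star _ (h i).2)))
    · refine FQ_of ∅ Set.finite_empty ?_
      rintro u y ⟨ξ, ⟨w, hw, η, hη, _⟩, _⟩
      exact absurd ⟨η, hη⟩ hne
  refine FQ_of (⋃ i, Set.range (hit (catOmega (W i) (omegaPow (V i)))).leftQuotient)
    (Set.finite_iUnion key) ?_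
  rintro u y ⟨ξ, hξ, hc⟩
  obtain ⟨i, hi⟩ := Set.mem_iUnion.1 hξ
  refine ⟨_, Set.mem_iUnion.2 ⟨i, u, rfl⟩, ⟨ξ, hi, hc⟩, ?_⟩
  rintro z ⟨ζ, hζ, hz⟩
  exact ⟨ζ, Set.mem_iUnion.2 ⟨i, hζ⟩, hz⟩

inductive Luk : List (Fin 3) → Prop
  | a : Luk [0]
  | b (u v w : List (Fin 3)) : Luk u → Luk v → Luk w → Luk ([1] ++ u ++ v ++ w)

lemma luk_eq : V3Eq 0 1 ({u | Luk u} : Set (List (Fin 3))) := by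
  intro u
  constructor
  · intro h
    cases h with
    | a => exact Or.inl rfl
    | b u v w h1 h2 h3 => exact Or.inr ⟨u, h1, v, h2, w, h3, rfl⟩
  · rintro (rfl | ⟨u, h1, v, h2, w, h3, rfl⟩)
    · exact Luk.a
    · exact Luk.b _ _ _ h1 h2 h3

lemma luk_prop {u : List (Fin 3)} (h : Luk u) :
    2 ∉ u ∧ u.count 0 = 2 * u.count 1 + 1 := by
  induction h with
  | a => decide
  | b u v w _ _ _ h1 h2 h3 =>
    refine ⟨?_, ?_⟩
    · simp [h1.1, h2.1, h3.1]
    · simp only [List.count_append, h1.2, h2.2, h3.2]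
      simp
      omega

lemma cyl_open (w : List (Fin 3)) : @IsOpen _ (cantorTop (Fin 3)) (cyl w) := by
  have e : cyl w = ⋂ i : Fin w.length, (fun ξ : ℕ → Fin 3 => ξ i) ⁻¹' {w[i]} := by
    ext ξ
    rw [mem_cyl]
    simp only [Set.mem_iInter, Set.mem_preimage, Set.mem_singleton_iff]
    exact ⟨fun h i => h i i.2, fun h i hi => h ⟨i, hi⟩⟩
  rw [e]
  change IsOpen _
  exact isOpen_iInter_of_finite fun i => (isOpen_discrete _).preimage (continuous_apply _)

lemma open_meagre_empty {U : Set (ℕ → Fin 3)} (hU : @IsOpen _ (cantorTop (Fin 3)) U)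
    (hm : @IsMeagre _ (cantorTop (Fin 3)) U) : U = ∅ := by
  change IsOpen U at hU
  change IsMeagre U at hm
  by_contra hne
  exact not_isMeagre_of_isOpen hU (Set.nonempty_iff_ne_empty.2 hne) hm

theorem stmt18 (V₃ : Language (Fin 3))
    (hfix : V3Eq 0 1 V₃)
    (hleast : ∀ W : Language (Fin 3), V3Eq 0 1 W → ∀ u, u ∈ V₃ → u ∈ W)
    (F₁ : Set (ℕ → Fin 3)) (hF₁ : F₁ = {ξ : ℕ → Fin 3 | ∃ v ∈ V₃, ξ ∈ cyl (v ++ [2])}) :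
    @IsOpen _ (cantorTop (Fin 3)) F₁ ∧ ¬ HasABP F₁ := by
  have hopen : @IsOpen _ (cantorTop (Fin 3)) F₁ := by
    have e : F₁ = ⋃ v ∈ {v | v ∈ V₃}, cyl (v ++ [2]) := by
      rw [hF₁]; ext ξ; simp
    rw [e]
    change IsOpen _
    exact isOpen_biUnion fun v _ => cyl_open _
  refine ⟨hopen, ?_⟩
  rintro ⟨E, F', hE, hEo, -, hF'm, hsub⟩
  have hluk : ∀ v ∈ V₃, 2 ∉ v ∧ v.count 0 = 2 * v.count 1 + 1 :=
    fun v hv => luk_prop (hleast _ luk_eq v hv)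
  have hmem : ∀ n, List.replicate n 1 ++ List.replicate (2 * n + 1) 0 ∈ V₃ := by
    have h0 : [0] ∈ V₃ := (hfix _).2 (Or.inl rfl)
    intro n
    induction n with
    | zero => exact h0
    | succ n ih =>
      refine (hfix _).2 (Or.inr ⟨_, ih, _, h0, _, h0, ?_⟩)
      have : 2 * (n + 1) + 1 = 2 * n + 1 + 1 + 1 := by ring
      rw [this, List.replicate_succ, List.replicate_succ' (n := 2 * n + 1 + 1),
        List.replicate_succ' (n := 2 * n + 1)]
      simp
  -- meagre open pieces
  have hpos : ∀ n, List.replicate n 1 ++ (List.replicate (2 * n + 1) 0 ++ [2]) ∈ hit E := by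
    intro n
    by_contra hno
    have hc : cyl (List.replicate n 1 ++ (List.replicate (2 * n + 1) 0 ++ [2])) ⊆ F' := by
      intro ξ hξ
      apply hsub
      refine Or.inl ⟨?_, fun hE => hno ⟨ξ, hE, hξ⟩⟩
      rw [hF₁]
      exact ⟨_, hmem n, by rw [List.append_assoc]; exact hξ⟩
    have := open_meagre_empty (cyl_open _) (@IsMeagre.mono _ (cantorTop (Fin 3)) _ _ hc hF'm)
    have h2 : wcat (List.replicate n 1 ++ (List.replicate (2 * n + 1) 0 ++ [2])) (fun _ => (0 : Fin 3)) ∈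
      cyl (List.replicate n 1 ++ (List.replicate (2 * n + 1) 0 ++ [2])) := ⟨_, rfl⟩
    rw [this] at h2
    exact h2
  have hneg : ∀ n m, List.replicate n 1 ++ (List.replicate m 0 ++ [2]) ∈ hit E → m = 2 * n + 1 := by
    rintro n m ⟨ξ, hξE, hξ⟩
    by_contra hne
    have hc : E ∩ cyl (List.replicate n 1 ++ (List.replicate m 0 ++ [2])) ⊆ F' := by
      rintro ζ ⟨hζE, hζ⟩
      apply hsub
      refine Or.inr ⟨hζE, fun hF => hne ?_⟩
      rw [hF₁] at hF
      obtain ⟨v, hv, hvc⟩ := hF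
      obtain ⟨h2, hcount⟩ := hluk v hv
      rw [← List.append_assoc] at hζ
      generalize hu : List.replicate n (1 : Fin 3) ++ List.replicate m 0 = u at hζ
      have hu2 : 2 ∉ u := by rw [← hu]; simp [List.mem_replicate]
      have aux : ∀ p q : List (Fin 3), 2 ∉ q → ζ ∈ cyl (p ++ [2]) → ζ ∈ cyl (q ++ [2]) →
          ¬ p.length < q.length := by
        intro p q hq hp' hq' hlt
        rw [mem_cyl] at hp' hq'
        have e1 := hp' p.length (by simp)
        have e2 := hq' p.length (by simp; omega)
        rw [List.getElem_append_left hlt] at e2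
        simp at e1
        apply hq
        rw [← e1, e2]
        exact List.getElem_mem _
      have l1 := aux v u hu2 hvc hζ
      have l2 := aux u v h2 hζ hvc
      have hp := prefix_of_cyl hvc hζ (by simp; omega)
      have heq : v ++ [2] = u ++ [2] := hp.eq_of_length (by simp; omega)
      have heq' : v = u := List.append_cancel_right heq
      rw [heq', ← hu] at hcount
      simpa [List.count_append, List.count_replicate] using hcount
    have ho : @IsOpen _ (cantorTop (Fin 3)) (E ∩ cyl (List.replicate n 1 ++ (List.replicate m 0 ++ [2]))) :=
      @IsOpen.inter _ (cantorTop (Fin 3)) _ _ hEo (cyl_open _)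
    have := open_meagre_empty ho (@IsMeagre.mono _ (cantorTop (Fin 3)) _ _ hc hF'm)
    exact (this ▸ (⟨hξE, hξ⟩ : ξ ∈ E ∩ cyl _) : ξ ∈ (∅ : Set (ℕ → Fin 3)))
  have hfin := FQ_hit hE
  obtain ⟨n, k, hnk, e⟩ : ∃ n k : ℕ, n ≠ k ∧
      (hit E).leftQuotient (List.replicate n 1) = (hit E).leftQuotient (List.replicate k 1) := by
    have : Finite (Set.range (hit E).leftQuotient) := hfin
    obtain ⟨n, k, h1, h2⟩ := Finite.exists_ne_map_eq_of_infinite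
      (fun n : ℕ => (⟨_, ⟨List.replicate n 1, rfl⟩⟩ : Set.range (hit E).leftQuotient))
    exact ⟨n, k, h1, congrArg Subtype.val h2⟩
  have h1 : (List.replicate (2 * n + 1) 0 ++ [2]) ∈ (hit E).leftQuotient (List.replicate n 1) := hpos n
  rw [e] at h1
  have := hneg k (2 * n + 1) h1
  omega

end AutoBaire
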